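/- For all t-matrices X ∈ C^{D₁×D₂} and Y ∈ C^{D₂×D₃}: rank(X) + rank(Y) − D₂·E_T ≤ rank(X ∘ Y) ≤ min(rank(X), rank(Y)), where ∘ is t-matrix multiplication, ≤ is the partial order on nonnegative t-scalars (the left inequality asserted after adding D₂·E_T to both sides, i.e., rank(X) + rank(Y) ≤ rank(X ∘ Y) + D₂·E_T), and min of two nonnegative t-scalars is taken Fourier-entrywise. -/

import Mathlib

open scoped BigOperators
open scoped Classical

noncomputable section

variable {N : ℕ}

/-- The underlying group `G = ZMod I₁ × ⋯ × ZMod I_N`. -/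
abbrev G (I : Fin N → ℕ) : Type := ∀ n : Fin N, ZMod (I n)

/-- A t-scalar is a function `G → ℂ`. -/
abbrev TS (I : Fin N → ℕ) : Type := G I → ℂ

variable {I : Fin N → ℕ} [∀ n, NeZero (I n)]

/-- Circular convolution product of t-scalars. -/
def tconv (X Y : TS I) : TS I := fun i => ∑ j, X (i - j) * Y j

/-- The zero t-scalar. -/
def ZT : TS I := fun _ => 0

/-- The identity t-scalar: the indicator function of `0 ∈ G`. -/
def ET : TS I := fun i => if i = 0 then 1 else 0

/-- The Fourier transform of a t-scalar:
`F(X)(i) = Σ_j X(j)·exp(2π√−1·Σ_n i_n·j_n / I_n)`. -/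
def tfourier (X : TS I) : TS I :=
  fun i => ∑ j, X j * Complex.exp (2 * Real.pi * Complex.I *
      ∑ n, ((i n).val : ℂ) * ((j n).val : ℂ) / ((I n : ℕ) : ℂ))

/-- Conjugate of a t-scalar: `conj(X)(i) = complex conjugate of X(−i)`. -/
def tconj (X : TS I) : TS I := fun i => starRingEnd ℂ (X (-i))

/-- A t-scalar is self-conjugate if `X = conj(X)`. -/
def SelfConj (X : TS I) : Prop := X = tconj X

/-- Real part `Re(X) = 2⁻¹(X + conj X)` of a t-scalar. -/
def tRe (X : TS I) : TS I := fun i => (X i + tconj X i) / 2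

/-- Imaginary part `Im(X) = (2√−1)⁻¹(X − conj X)` of a t-scalar. -/
def tIm (X : TS I) : TS I := fun i => (X i - tconj X i) / (2 * Complex.I)

/-- A t-scalar is nonnegative if it is `Y ∘ Y` for some self-conjugate `Y`. -/
def TNonneg (X : TS I) : Prop := ∃ Y : TS I, SelfConj Y ∧ X = tconv Y Y

/-- A t-scalar is invertible if `X ∘ Y = E_T` for some `Y`. -/
def TInv (X : TS I) : Prop := ∃ Y : TS I, tconv X Y = ET

/-- t-matrix multiplication: entrywise convolution products. -/
def tmul {a b c : ℕ} (A : Matrix (Fin a) (Fin b) (TS I)) (B : Matrix (Fin b) (Fin c) (TS I)) :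
    Matrix (Fin a) (Fin c) (TS I) :=
  Matrix.of fun α γ => ∑ β, tconv (A α β) (B β γ)

/-- Conjugate transpose of a t-matrix. -/
def htrans {a b : ℕ} (A : Matrix (Fin a) (Fin b) (TS I)) : Matrix (Fin b) (Fin a) (TS I) :=
  Matrix.of fun β α => tconj (A α β)

/-- The identity t-matrix. -/
def tId (Q : ℕ) : Matrix (Fin Q) (Fin Q) (TS I) :=
  Matrix.of fun α β => if α = β then ET else ZT

/-- Diagonal t-matrix with the given t-scalar diagonal entries. -/
def tdiag {Q : ℕ} (lam : Fin Q → TS I) : Matrix (Fin Q) (Fin Q) (TS I) :=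
  Matrix.of fun k l => if k = l then lam k else ZT

/-- The `i`-th Fourier fslice of a t-matrix. -/
def fslice {a b : ℕ} (A : Matrix (Fin a) (Fin b) (TS I)) (i : G I) :
    Matrix (Fin a) (Fin b) ℂ :=
  Matrix.of fun α β => tfourier (A α β) i

/-- Frobenius norm of a complex matrix. -/
def frob {a b : ℕ} (M : Matrix (Fin a) (Fin b) ℂ) : ℝ :=
  Real.sqrt (∑ α, ∑ β, Complex.normSq (M α β))

/-! The Fourier transform turns convolution into pointwise multiplication because its kernel is an
additive character of `G`. Hence the slices of `X ∘ Y` are the products of the slices of `X` and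
`Y`, and the bounds are, slice by slice, Sylvester's rank inequality and the fact that the rank of
a product is at most the rank of either factor. -/

section Sylvester

open Module

variable {K U V W : Type*} [DivisionRing K] [AddCommGroup U] [Module K U] [AddCommGroup V]
  [Module K V] [AddCommGroup W] [Module K W]

theorem finrank_map_add_finrank_inf_ker (f : V →ₗ[K] W) (p : Submodule K V)
    [FiniteDimensional K p] :
    finrank K (p.map f) + finrank K ↥(p ⊓ f.ker) = finrank K p := by
  have h := (f.domRestrict p).finrank_range_add_finrank_ker
  rwa [LinearMap.range_domRestrict, LinearMap.ker_domRestrict, ← Submodule.finrank_map_subtype_eq,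
    Submodule.map_comap_subtype] at h

theorem finrank_range_add_finrank_range_le_finrank_range_comp_add [FiniteDimensional K V]
    (f : V →ₗ[K] W) (g : U →ₗ[K] V) :
    finrank K f.range + finrank K g.range ≤ finrank K (f ∘ₗ g).range + finrank K V := by
  have hrestrict : finrank K (f ∘ₗ g).range + finrank K ↥(g.range ⊓ f.ker) =
      finrank K g.range := by
    rw [LinearMap.range_comp, finrank_map_add_finrank_inf_ker]
  have hker : finrank K ↥(g.range ⊓ f.ker) ≤ finrank K f.ker :=
    Submodule.finrank_mono inf_le_right
  have hf := f.finrank_range_add_finrank_ker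
  lia

theorem matrix_rank_add_rank_le_rank_mul_add_card {F l m n : Type*} [Field F] [Fintype m]
    [Fintype n] (A : Matrix l m F) (B : Matrix m n F) :
    A.rank + B.rank ≤ (A * B).rank + Fintype.card m := by
  have h := finrank_range_add_finrank_range_le_finrank_range_comp_add A.mulVecLin B.mulVecLin
  rwa [← Matrix.mulVecLin_mul, finrank_fintype_fun_eq_card] at h

end Sylvester

theorem sum_convolution_mul_addChar {A R : Type*} [AddGroup A] [Fintype A] [CommSemiring R]
    (ψ : AddChar A R) (f g : A → R) :
    ∑ a, (∑ b, f (a - b) * g b) * ψ a = (∑ a, f a * ψ a) * ∑ b, g b * ψ b := by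
  calc ∑ a, (∑ b, f (a - b) * g b) * ψ a
      = ∑ b, ∑ a, f (a - b) * g b * ψ a := by
        simp only [Finset.sum_mul]
        exact Finset.sum_comm
    _ = ∑ b, ∑ a, f a * g b * ψ (a + b) := by
        refine Finset.sum_congr rfl fun b _ ↦ ?_
        exact Fintype.sum_equiv (Equiv.subRight b) _ _ fun a ↦ by simp
    _ = ∑ b, ∑ a, f a * ψ a * (g b * ψ b) := by
        simp only [AddChar.map_add_eq_mul, mul_mul_mul_comm]
    _ = (∑ a, f a * ψ a) * ∑ b, g b * ψ b := by
        rw [Finset.sum_comm, Finset.sum_mul_sum]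

/-- The additive character of `G` with frequency `i`, the kernel of `tfourier` at `i`. It is built
from the standard characters of the factors `ZMod (I n)`, so that additivity need not be checked on
the representatives `ZMod.val` in the exponential of `tfourier`. -/
def tfourierChar (i : G I) : AddChar (G I) ℂ :=
  ∏ n, (ZMod.stdAddChar.mulShift (i n)).compAddMonoidHom (Pi.evalAddMonoidHom _ n)

theorem stdAddChar_mul_eq_exp {n : ℕ} [NeZero n] (a b : ZMod n) :
    ZMod.stdAddChar (a * b) = Complex.exp (2 * Real.pi * Complex.I * (a.val * b.val / n)) := by
  have hval : a * b = ((a.val * b.val : ℤ) : ZMod n) := by simp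
  rw [hval, ZMod.stdAddChar_coe]
  push_cast
  ring_nf

theorem tfourierChar_apply (i j : G I) :
    tfourierChar i j = Complex.exp (2 * Real.pi * Complex.I *
      ∑ n, ((i n).val : ℂ) * ((j n).val : ℂ) / ((I n : ℕ) : ℂ)) := by
  simp only [tfourierChar, AddChar.prod_apply, AddChar.compAddMonoidHom_apply,
    Pi.evalAddMonoidHom_apply, AddChar.mulShift_apply, stdAddChar_mul_eq_exp, Finset.mul_sum,
    Complex.exp_sum]

theorem tfourier_eq_sum_tfourierChar (X : TS I) (i : G I) :
    tfourier X i = ∑ j, X j * tfourierChar i j := by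
  simp only [tfourier, tfourierChar_apply]

theorem tfourier_tconv (X Y : TS I) (i : G I) :
    tfourier (tconv X Y) i = tfourier X i * tfourier Y i := by
  simp only [tfourier_eq_sum_tfourierChar, tconv]
  exact sum_convolution_mul_addChar (tfourierChar i) X Y

theorem tfourier_sum {ι : Type*} (s : Finset ι) (X : ι → TS I) (i : G I) :
    tfourier (∑ k ∈ s, X k) i = ∑ k ∈ s, tfourier (X k) i := by
  simp only [tfourier, Finset.sum_apply, Finset.sum_mul]
  exact Finset.sum_comm

theorem fslice_tmul {a b c : ℕ} (A : Matrix (Fin a) (Fin b) (TS I))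
    (B : Matrix (Fin b) (Fin c) (TS I)) (i : G I) :
    fslice (tmul A B) i = fslice A i * fslice B i := by
  ext α γ
  simp only [fslice, tmul, Matrix.of_apply, Matrix.mul_apply, tfourier_sum, tfourier_tconv]

/-- `rank(X) + rank(Y) − D₂·E_T ≤ rank(X ∘ Y) ≤ min(rank X, rank Y)`
(the left inequality asserted after adding `D₂·E_T` to both sides), in the
Fourier-entrywise partial order on nonnegative t-scalars. -/
theorem tmatrix_rank_mul_bounds (N : ℕ) (I : Fin N → ℕ) [∀ n, NeZero (I n)]
    (D₁ D₂ D₃ : ℕ)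
    (X : Matrix (Fin D₁) (Fin D₂) (TS I)) (Y : Matrix (Fin D₂) (Fin D₃) (TS I)) :
    ∀ i, (fslice X i).rank + (fslice Y i).rank ≤ (fslice (tmul X Y) i).rank + D₂ ∧
      (fslice (tmul X Y) i).rank ≤ min ((fslice X i).rank) ((fslice Y i).rank) := by
  intro i
  rw [fslice_tmul]
  have hsylvester := matrix_rank_add_rank_le_rank_mul_add_card (fslice X i) (fslice Y i)
  rw [Fintype.card_fin] at hsylvester
  exact ⟨hsylvester, Matrix.rank_mul_le _ _⟩
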